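/- Let ℓ ≥ 2 and let K ⊆ ℝ be a set having an accumulation point. Define D = {I ∈ ℝ^ℓ : there exist i, j ∈ {1,…,ℓ} with i ≠ j and c ∈ K such that I_j = c·I_i}. Then D is a key set for C^ω(ℝ^ℓ): every real-analytic function f : ℝ^ℓ → ℝ that vanishes at every point of D vanishes identically on ℝ^ℓ. -/

import Mathlib

open MeasureTheory Set Real

noncomputable section

/-!
A single pair of coordinates suffices, and the argument works for any two linearly
independent functionals `φ`, `ψ` in place of `x_i`, `x_j`. Through a point `x` with `φ x ≠ 0` runs
a line on which `φ` is constant and `ψ = t φ x` at parameter `t`; it meets `{∃ c ∈ K, ψ = c φ}` at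
all parameters `t ∈ K`, so the one-variable identity theorem gives `f x = 0`. Such points `x` are
dense.
-/

open Filter Module

section KeySet

variable {𝕜 : Type*} [NontriviallyNormedField 𝕜]
  {E : Type*} [NormedAddCommGroup E] [NormedSpace 𝕜 E]
  {G : Type*} [NormedAddCommGroup G] [NormedSpace 𝕜 G]
  {F : Type*} [NormedAddCommGroup F] [NormedSpace 𝕜 F]

variable (𝕜 F) in
/-- `Δ` is a key set for the analytic functions `E → F`: those vanishing on `Δ` are zero.
Analyticity is over `𝕜` and on the whole of `E`. -/
def IsKeySet (Δ : Set E) : Prop :=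
  ∀ f : E → F, AnalyticOnNhd 𝕜 f univ → (∀ x ∈ Δ, f x = 0) → ∀ x, f x = 0

theorem IsKeySet.mono {Δ Δ' : Set E} (hΔ : IsKeySet 𝕜 F Δ) (h : Δ ⊆ Δ') : IsKeySet 𝕜 F Δ' :=
  fun f hf hf₀ ↦ hΔ f hf fun x hx ↦ hf₀ x (h hx)

theorem isKeySet_of_dense {Δ : Set E} (hΔ : Dense Δ) : IsKeySet 𝕜 F Δ := fun _ hf hf₀ ↦
  congrFun (Continuous.ext_on hΔ (continuousOn_univ.1 hf.continuousOn) continuous_const hf₀)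

theorem isKeySet_of_accPt [ConnectedSpace 𝕜] {K : Set 𝕜} {x : 𝕜} (hK : AccPt x (𝓟 K)) :
    IsKeySet 𝕜 F K := fun _ hf hf₀ ↦
  congrFun (hf.eq_of_frequently_eq analyticOnNhd_const
    ((accPt_iff_frequently_nhdsNE.1 hK).mono hf₀))

theorem IsKeySet.of_preimage {S Δ : Set E} (hS : IsKeySet 𝕜 F S)
    (h : ∀ x ∈ S, ∃ γ : G → E, AnalyticOnNhd 𝕜 γ univ ∧ x ∈ range γ ∧ IsKeySet 𝕜 F (γ ⁻¹' Δ)) :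
    IsKeySet 𝕜 F Δ := by
  refine fun f hf hf₀ ↦ hS f hf fun x hx ↦ ?_
  obtain ⟨γ, hγ, ⟨t, rfl⟩, hkey⟩ := h x hx
  exact hkey (f ∘ γ) (hf.comp hγ (mapsTo_univ _ _)) (fun s hs ↦ hf₀ (γ s) hs) t

theorem dense_setOf_dual_ne_zero {φ : Dual 𝕜 E} (hφ : φ ≠ 0) : Dense {x | φ x ≠ 0} := by
  refine interior_eq_empty_iff_dense_compl.1 (not_nonempty_iff_eq_empty.1 fun hint ↦ hφ ?_)
  exact LinearMap.ker_eq_top.1 ((LinearMap.ker φ).eq_top_of_nonempty_interior' hint)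

end KeySet

theorem exists_eq_zero_eq_one_of_linearIndependent {k V : Type*} [Field k]
    [AddCommGroup V] [Module k V] {φ ψ : Dual k V} (h : LinearIndependent k ![φ, ψ]) :
    ∃ v, φ v = 0 ∧ ψ v = 1 := by
  have hψ : ψ ∉ Submodule.span k {φ} := by
    rw [Submodule.mem_span_singleton]
    rintro ⟨a, ha⟩
    exact (LinearIndependent.pair_iff' (h.ne_zero 0)).1 h a ha
  obtain ⟨u, hφu, hψu⟩ : ∃ u, φ u = 0 ∧ ψ u ≠ 0 := by
    contrapose! hψ
    rw [← range_const (ι := Unit)]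
    exact mem_span_of_iInf_ker_le_ker fun u hu ↦ hψ u (by simpa using hu)
  exact ⟨(ψ u)⁻¹ • u, by simp [hφu], by simp [hψu]⟩

theorem linearIndependent_proj_pair {k ι : Type*} [Field k] {i j : ι} (hij : i ≠ j) :
    LinearIndependent k
      ![(LinearMap.proj i : Dual k (ι → k)), (LinearMap.proj j : Dual k (ι → k))] := by
  classical
  refine LinearIndependent.pair_iff.2 fun s t hst ↦ ⟨?_, ?_⟩
  · simpa [hij] using LinearMap.congr_fun hst (Pi.single i 1)
  · simpa [hij] using LinearMap.congr_fun hst (Pi.single j 1)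

theorem keySet_of_accumulation_general {𝕜 E F : Type*} [NontriviallyNormedField 𝕜]
    [ConnectedSpace 𝕜] [NormedAddCommGroup E] [NormedSpace 𝕜 E]
    [NormedAddCommGroup F] [NormedSpace 𝕜 F] {φ ψ : Dual 𝕜 E}
    (hφψ : LinearIndependent 𝕜 ![φ, ψ]) {K : Set 𝕜} {c₀ : 𝕜} (hK : AccPt c₀ (𝓟 K)) :
    IsKeySet 𝕜 F {x | ∃ c ∈ K, ψ x = c * φ x} := by
  obtain ⟨v, hφv, hψv⟩ := exists_eq_zero_eq_one_of_linearIndependent hφψ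
  have hφ : φ ≠ 0 := hφψ.ne_zero 0
  refine (isKeySet_of_dense (dense_setOf_dual_ne_zero hφ)).of_preimage (G := 𝕜) fun x hx ↦ ?_
  let γ (t : 𝕜) : E := x + (t * φ x - ψ x) • v
  have hφγ (t : 𝕜) : φ (γ t) = φ x := by simp [γ, hφv]
  have hψγ (t : 𝕜) : ψ (γ t) = t * φ x := by simp [γ, hψv]
  have hγ : AnalyticOnNhd 𝕜 γ univ := fun t _ ↦ by fun_prop
  have hγx : γ (ψ x / φ x) = x := by simp [γ, div_mul_cancel₀ _ hx]
  exact ⟨γ, hγ, ⟨_, hγx⟩,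
    (isKeySet_of_accPt hK).mono fun t ht ↦ ⟨t, ht, by rw [hψγ, hφγ]⟩⟩

/-- The set D = {I ∈ ℝ^ℓ : I_j = c I_i for some i ≠ j and c ∈ K}, for K ⊆ ℝ with an
accumulation point, is a key set for C^ω(ℝ^ℓ). -/
theorem keySet_of_accumulation
    (ℓ : ℕ) (hℓ : 2 ≤ ℓ)
    (K : Set ℝ) (hK : ∃ x : ℝ, AccPt x (Filter.principal K)) :
    ∀ f : (Fin ℓ → ℝ) → ℝ, AnalyticOnNhd ℝ f univ →
      (∀ I : Fin ℓ → ℝ, (∃ i j : Fin ℓ, i ≠ j ∧ ∃ c ∈ K, I j = c * I i) → f I = 0) →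
      ∀ I : Fin ℓ → ℝ, f I = 0 := by
  obtain ⟨c₀, hc₀⟩ := hK
  obtain ⟨i, j, hij⟩ := (Fin.nontrivial_iff_two_le.2 hℓ).exists_pair_ne
  have hproj := linearIndependent_proj_pair (k := ℝ) hij
  have hkey := keySet_of_accumulation_general (F := ℝ) hproj hc₀
  exact hkey.mono fun I hI ↦ ⟨i, j, hij, hI⟩
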